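/- arXiv:2108.02683 — 2 statements merged into one kernel-verified Lean document; each statement's English description precedes it below -/
import Mathlib

section
/- Fix Λ ∈ ℝ and real parameters γ, χ', and let r_C = −(γ + χ'/2) K_2∧K_3 + (γ − χ'/2) J_2∧J_3 − γ K_1∧J_1 + (χ'/2)(K_2∧J_2 + K_3∧J_3) ∈ g_Λ ∧ g_Λ (the Type C classical r-matrix of the Lorentz algebra). Then the Schouten bracket [[r_C,r_C]] is invariant under the adjoint action of all of g_Λ (i.e. X·[[r_C,r_C]] = 0 for every X ∈ g_Λ) if and only if γ = 0; in that case r_C = −(χ'/2)(K_2∧K_3 − K_2∧J_2 − K_3∧J_3 + J_2∧J_3) and [[r_C,r_C]] = 0. -/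
/-!
A translation maps the Lorentz subalgebra `𝔥` of `g_Λ` into the span `𝔭` of the translations, and
the resulting action of `𝔥` on `𝔭` is the vector representation, which is faithful. If
`T ∈ 𝔥 ⊗ g_Λ ⊗ g_Λ` and `P ∈ 𝔭`, then only the term of `P·T` in which `P` acts on the first slot
can leave `𝔥 ⊗ g_Λ ⊗ g_Λ`, so invariance of `T` forces `([P, ·] ⊗ 1 ⊗ 1) T = 0` for all `P`, and
faithfulness gives `T = 0`. If `r ∈ 𝔥 ⊗ g_Λ`, then also `[[r,r]] ∈ 𝔥 ⊗ g_Λ ⊗ g_Λ` because `𝔥` is a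
subalgebra; hence `[[r,r]]` is invariant if and only if it vanishes.

For `r_C`, the `K_1 ⊗ J_2 ⊗ K_3` coefficient of `[[r_C,r_C]]` is `-γ²`. For `γ = 0`, `r_C` is a
multiple of the wedge of the commuting elements `K_2 + J_3` and `K_3 - J_2`, and in general
`[[x∧y,x∧y]] = [x,y]∧x∧y`.
-/

namespace NCST

noncomputable section

/-- The underlying 10-dimensional vector space of `g_Λ`, with basis indices
`0,1,2,3 ↦ P_0,P_1,P_2,P_3`, `4,5,6 ↦ K_1,K_2,K_3`, `7,8,9 ↦ J_1,J_2,J_3`. -/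
abbrev V : Type := Fin 10 → ℝ

/-- The `i`-th basis vector. -/
def e (i : Fin 10) : V := Pi.single i 1

/-- The Levi-Civita symbol on `{1,2,3}` (indices shifted to `Fin 3`), `ε_{123} = 1`. -/
def eps (a b c : Fin 3) : ℝ :=
  if (a = 0 ∧ b = 1 ∧ c = 2) ∨ (a = 1 ∧ b = 2 ∧ c = 0) ∨ (a = 2 ∧ b = 0 ∧ c = 1) then 1
  else if (a = 2 ∧ b = 1 ∧ c = 0) ∨ (a = 1 ∧ b = 0 ∧ c = 2) ∨ (a = 0 ∧ b = 2 ∧ c = 1) then -1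
  else 0

/-- Translation generators `P_μ`, `μ = 0,1,2,3`. -/
def Pv (μ : Fin 4) : V := e ⟨μ.1, by have := μ.isLt; omega⟩
/-- Boost generators `K_a`, `a = 1,2,3` (index `a+1` in `Fin 3`-terms). -/
def Kv (a : Fin 3) : V := e ⟨a.1 + 4, by have := a.isLt; omega⟩
/-- Rotation generators `J_a`, `a = 1,2,3`. -/
def Jv (a : Fin 3) : V := e ⟨a.1 + 7, by have := a.isLt; omega⟩

/-- Labels for the kinematical basis generators. -/
inductive Gen : Type
  | P : Fin 4 → Gen
  | K : Fin 3 → Gen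
  | J : Fin 3 → Gen

/-- `[K_a, P_μ]`: equals `P_a` if `μ = 0` and `δ_{ab} P_0` if `μ = b ∈ {1,2,3}`. -/
def KPbra (a : Fin 3) (μ : Fin 4) : V :=
  if μ.1 = 0 then Pv ⟨a.1 + 1, by have := a.isLt; omega⟩
  else if μ.1 = a.1 + 1 then Pv 0 else 0

/-- `[J_a, P_μ]`: equals `0` if `μ = 0` and `ε_{abc} P_c` if `μ = b ∈ {1,2,3}`. -/
def JPbra (a : Fin 3) (μ : Fin 4) : V :=
  if h : μ.1 = 0 then 0
  else ∑ c : Fin 3, eps a ⟨μ.1 - 1, by have := μ.isLt; omega⟩ c •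
    Pv ⟨c.1 + 1, by have := c.isLt; omega⟩

/-- `[P_μ, P_ν]`: `[P_0,P_a] = -Λ K_a`, `[P_a,P_b] = Λ ε_{abc} J_c`. -/
def PPbra (Λ : ℝ) (μ ν : Fin 4) : V :=
  if _hμ : μ.1 = 0 then
    (if _hν : ν.1 = 0 then 0 else (-Λ) • Kv ⟨ν.1 - 1, by have := ν.isLt; omega⟩)
  else if _hν : ν.1 = 0 then Λ • Kv ⟨μ.1 - 1, by have := μ.isLt; omega⟩
  else Λ • ∑ c : Fin 3, eps ⟨μ.1 - 1, by have := μ.isLt; omega⟩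
    ⟨ν.1 - 1, by have := ν.isLt; omega⟩ c • Jv c

/-- `[K_a, K_b] = -ε_{abc} J_c`. -/
def KKbra (a b : Fin 3) : V := -∑ c : Fin 3, eps a b c • Jv c
/-- `[J_a, K_b] = ε_{abc} K_c`. -/
def JKbra (a b : Fin 3) : V := ∑ c : Fin 3, eps a b c • Kv c
/-- `[J_a, J_b] = ε_{abc} J_c`. -/
def JJbra (a b : Fin 3) : V := ∑ c : Fin 3, eps a b c • Jv c

/-- The bracket of two basis generators of `g_Λ`, as in eq. (1) of the paper. -/
def genBra (Λ : ℝ) : Gen → Gen → V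
  | .P μ, .P ν => PPbra Λ μ ν
  | .P μ, .K a => -KPbra a μ
  | .P μ, .J a => -JPbra a μ
  | .K a, .P μ => KPbra a μ
  | .K a, .K b => KKbra a b
  | .K a, .J b => -JKbra b a
  | .J a, .P μ => JPbra a μ
  | .J a, .K b => JKbra a b
  | .J a, .J b => JJbra a b

/-- Decoding of a `Fin 10` index into the corresponding generator label. -/
def idxGen (i : Fin 10) : Gen :=
  if h : i.1 < 4 then .P ⟨i.1, h⟩
  else if h2 : i.1 < 7 then .K ⟨i.1 - 4, by omega⟩
  else .J ⟨i.1 - 7, by have := i.isLt; omega⟩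

/-- The bracket of `g_Λ`, extended bilinearly from the structure constants. -/
def bra (Λ : ℝ) (x y : V) : V :=
  ∑ i : Fin 10, ∑ j : Fin 10, (x i * y j) • genBra Λ (idxGen i) (idxGen j)

/-- Coefficients of elements of `g_Λ ⊗ g_Λ` in the basis `e_i ⊗ e_j`. -/
abbrev T2 : Type := Fin 10 → Fin 10 → ℝ
/-- Coefficients of elements of `g_Λ ⊗ g_Λ ⊗ g_Λ`. -/
abbrev T3 : Type := Fin 10 → Fin 10 → Fin 10 → ℝ

/-- The diagonal adjoint action `X·(a⊗b) = [X,a]⊗b + a⊗[X,b]` on `g_Λ ⊗ g_Λ`,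
in coordinates; `adT Λ X r` is the cocommutator `δ_r(X)`. -/
def adT (Λ : ℝ) (X : V) (r : T2) : T2 :=
  fun k l => (∑ i : Fin 10, r i l * bra Λ X (e i) k) +
    ∑ j : Fin 10, r k j * bra Λ X (e j) l

/-- `x ∧ y := x ⊗ y - y ⊗ x`, in coordinates. -/
def wedge (x y : V) : T2 := fun i j => x i * y j - x j * y i

/-- The wedge `e_i ∧ e_j` of two basis vectors. -/
def wEl (i j : Fin 10) : T2 := wedge (e i) (e j)

/-- The Schouten bracket `[[r,r]]` of `r ∈ g_Λ ⊗ g_Λ`, in coordinates: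
`[[r,r]] = [r_{12},r_{13}] + [r_{12},r_{23}] + [r_{13},r_{23}]`, i.e. for
`r = Σ aᵢ⊗bᵢ`, `[[r,r]] = Σᵢⱼ ([aᵢ,aⱼ]⊗bᵢ⊗bⱼ + aᵢ⊗[bᵢ,aⱼ]⊗bⱼ + aᵢ⊗aⱼ⊗[bᵢ,bⱼ])`. -/
def schouten (Λ : ℝ) (r : T2) : T3 :=
  fun p q s =>
    ∑ i : Fin 10, ∑ j : Fin 10, ∑ k : Fin 10, ∑ l : Fin 10, r i j * r k l *
      (bra Λ (e i) (e k) p * (if j = q then (1:ℝ) else 0) * (if l = s then (1:ℝ) else 0)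
      + (if i = p then (1:ℝ) else 0) * bra Λ (e j) (e k) q * (if l = s then (1:ℝ) else 0)
      + (if i = p then (1:ℝ) else 0) * (if k = q then (1:ℝ) else 0) * bra Λ (e j) (e l) s)

/-- The diagonal adjoint action of `X ∈ g_Λ` on `g_Λ ⊗ g_Λ ⊗ g_Λ`, in coordinates. -/
def adT3 (Λ : ℝ) (X : V) (T : T3) : T3 :=
  fun p q s => (∑ i : Fin 10, T i q s * bra Λ X (e i) p)
    + (∑ j : Fin 10, T p j s * bra Λ X (e j) q)
    + ∑ k : Fin 10, T p q k * bra Λ X (e k) s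

/-- The Type C classical `r`-matrix of the Lorentz algebra:
`r_C = −(γ + χ'/2) K_2∧K_3 + (γ − χ'/2) J_2∧J_3 − γ K_1∧J_1 + (χ'/2)(K_2∧J_2 + K_3∧J_3)`. -/
def rC (γ χ : ℝ) : T2 :=
  (-(γ + χ / 2)) • wEl 5 6 + (γ - χ / 2) • wEl 8 9 + (-γ) • wEl 4 7
    + (χ / 2) • (wEl 5 8 + wEl 6 9)

theorem e_apply (i j : Fin 10) : e i j = if j = i then 1 else 0 :=
  Pi.single_apply i 1 j

/-- The bracket `bra Λ` bundled as a bilinear map. -/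
def braₗ (Λ : ℝ) : V →ₗ[ℝ] V →ₗ[ℝ] V :=
  LinearMap.mk₂ ℝ (bra Λ)
    (fun _ _ _ => by simp [bra, add_mul, add_smul, Finset.sum_add_distrib])
    (fun _ _ _ => by simp [bra, Finset.smul_sum, smul_smul, mul_assoc])
    (fun _ _ _ => by simp [bra, mul_add, add_smul, Finset.sum_add_distrib])
    (fun _ _ _ => by simp [bra, Finset.smul_sum, smul_smul, mul_left_comm])

theorem bra_eq_braₗ (Λ : ℝ) (x y : V) : bra Λ x y = braₗ Λ x y := rfl

theorem braₗ_e_e (Λ : ℝ) (i j : Fin 10) :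
    braₗ Λ (e i) (e j) = genBra Λ (idxGen i) (idxGen j) := by
  simp [← bra_eq_braₗ, bra, e_apply]

theorem bra_apply (Λ : ℝ) (x y : V) (p : Fin 10) :
    bra Λ x y p = ∑ i, ∑ j, x i * y j * genBra Λ (idxGen i) (idxGen j) p := by
  simp [bra, Finset.sum_apply]

theorem bra_apply_eq_sum_right (Λ : ℝ) (x y : V) (p : Fin 10) :
    bra Λ x y p = ∑ j, y j * bra Λ x (e j) p := by
  have hy : y = ∑ j, y j • e j := ((Pi.basisFun ℝ (Fin 10)).sum_repr y).symm.trans (by simp [e])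
  conv_lhs => rw [hy]
  simp [bra_eq_braₗ, Finset.sum_apply]

theorem eps_swap (a b c : Fin 3) : eps b a c = -eps a b c := by
  fin_cases a <;> fin_cases b <;> fin_cases c <;> simp [eps]

theorem PPbra_swap (Λ : ℝ) (μ ν : Fin 4) : PPbra Λ ν μ = -PPbra Λ μ ν := by
  unfold PPbra
  split_ifs <;> simp [eps_swap ⟨μ.1 - 1, _⟩ ⟨ν.1 - 1, _⟩]

theorem genBra_swap (Λ : ℝ) : ∀ g h : Gen, genBra Λ h g = -genBra Λ g h
  | .P μ, .P ν => PPbra_swap Λ μ ν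
  | .K a, .K b => by simp [genBra, KKbra, eps_swap a b]
  | .J a, .J b => by simp [genBra, JJbra, eps_swap a b]
  | .P _, .K _ | .P _, .J _ | .K _, .J _ => (neg_neg _).symm
  | .K _, .P _ | .J _, .P _ | .J _, .K _ => rfl

theorem bra_swap (Λ : ℝ) (x y : V) : bra Λ y x = -bra Λ x y := by
  simp only [bra, ← Finset.sum_neg_distrib]
  rw [Finset.sum_comm]
  refine Finset.sum_congr rfl fun i _ => Finset.sum_congr rfl fun j _ => ?_
  rw [genBra_swap Λ (idxGen i), mul_comm, smul_neg]

theorem bra_self (Λ : ℝ) (x : V) : bra Λ x x = 0 :=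
  self_eq_neg.mp (bra_swap Λ x x)

theorem adT3_apply (Λ : ℝ) (X : V) (T : T3) (p q s : Fin 10) :
    adT3 Λ X T p q s =
      bra Λ X (fun i => T i q s) p + bra Λ X (fun j => T p j s) q + bra Λ X (T p q) s := by
  simp only [adT3, bra_apply_eq_sum_right Λ X (fun i => T i q s),
    bra_apply_eq_sum_right Λ X (fun j => T p j s), bra_apply_eq_sum_right Λ X (T p q)]

theorem schouten_apply (Λ : ℝ) (r : T2) (p q s : Fin 10) :
    schouten Λ r p q s = bra Λ (fun i => r i q) (fun k => r k s) p
      + bra Λ (r p) (fun k => r k s) q + bra Λ (r p) (r q) s := by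
  rw [bra_apply, bra_apply, bra_apply]
  simp [schouten, bra_eq_braₗ, braₗ_e_e, mul_add, Finset.sum_add_distrib, Finset.sum_ite_irrel,
    mul_assoc]

theorem schouten_smul (Λ c : ℝ) (r : T2) : schouten Λ (c • r) = c ^ 2 • schouten Λ r := by
  have hcol (q : Fin 10) : (fun i => (c • r) i q) = c • fun i => r i q := rfl
  ext p q s
  rw [Pi.smul_apply, Pi.smul_apply, Pi.smul_apply, schouten_apply, schouten_apply, hcol, hcol]
  simp only [bra_eq_braₗ, map_smul, LinearMap.smul_apply, Pi.smul_apply, smul_eq_mul]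
  ring

theorem schouten_apply_of_skew (Λ : ℝ) {r : T2} (hr : ∀ i j, r j i = -r i j) (p q s : Fin 10) :
    schouten Λ r p q s = bra Λ (r q) (r s) p - bra Λ (r p) (r s) q + bra Λ (r p) (r q) s := by
  have hcol (q : Fin 10) : (fun i => r i q) = -r q := funext fun i => hr q i
  rw [schouten_apply, hcol, hcol]
  simp [bra_eq_braₗ, sub_eq_add_neg]

theorem wedge_swap (x y : V) (i j : Fin 10) : wedge x y j i = -wedge x y i j := by
  simp [wedge]

theorem wedge_apply (x y : V) (i : Fin 10) : wedge x y i = x i • y - y i • x := by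
  ext j
  simp [wedge, mul_comm]

theorem schouten_wedge_apply (Λ : ℝ) (x y : V) (p q s : Fin 10) :
    schouten Λ (wedge x y) p q s = bra Λ x y p * wedge x y q s
      - bra Λ x y q * wedge x y p s + bra Λ x y s * wedge x y p q := by
  have hbra (i j : Fin 10) : bra Λ (wedge x y i) (wedge x y j) = wedge x y i j • bra Λ x y := by
    have hxx : braₗ Λ x x = 0 := bra_self Λ x
    have hyy : braₗ Λ y y = 0 := bra_self Λ y
    have hyx : braₗ Λ y x = -braₗ Λ x y := bra_swap Λ x y
    have hij : wedge x y i j = x i * y j - x j * y i := rfl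
    rw [hij, wedge_apply, wedge_apply]
    simp only [bra_eq_braₗ, map_sub, map_smul, LinearMap.sub_apply, LinearMap.smul_apply,
      hxx, hyy, hyx]
    module
  simp only [schouten_apply_of_skew Λ (wedge_swap x y), hbra, Pi.smul_apply, smul_eq_mul]
  ring

/-- The Lorentz subalgebra of `g_Λ`, spanned by the `K_a` and `J_a`, cut out by the vanishing of
the four translation coordinates. -/
def lorentz : Submodule ℝ V := Submodule.pi (Set.Iio 4) fun _ => ⊥

theorem mem_lorentz {x : V} : x ∈ lorentz ↔ ∀ i < 4, x i = 0 := Iff.rfl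

theorem e_mem_lorentz {i : Fin 10} (hi : 4 ≤ i) : e i ∈ lorentz :=
  mem_lorentz.2 fun _ hj => Pi.single_eq_of_ne (hj.trans_le hi).ne _

theorem Kv_mem_lorentz (a : Fin 3) : Kv a ∈ lorentz :=
  e_mem_lorentz (Nat.le_add_left 4 a)

theorem Jv_mem_lorentz (a : Fin 3) : Jv a ∈ lorentz :=
  e_mem_lorentz (Nat.le_add_left_of_le (by decide : 4 ≤ 7))

theorem genBra_mem_lorentz (Λ : ℝ) {i j : Fin 10} (hi : 4 ≤ i) (hj : 4 ≤ j) :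
    genBra Λ (idxGen i) (idxGen j) ∈ lorentz := by
  have sum_Kv (f : Fin 3 → ℝ) : ∑ c, f c • Kv c ∈ lorentz :=
    lorentz.sum_mem fun c _ => lorentz.smul_mem _ (Kv_mem_lorentz c)
  have sum_Jv (f : Fin 3 → ℝ) : ∑ c, f c • Jv c ∈ lorentz :=
    lorentz.sum_mem fun c _ => lorentz.smul_mem _ (Jv_mem_lorentz c)
  have hi' : ¬ i.1 < 4 := not_lt.2 hi
  have hj' : ¬ j.1 < 4 := not_lt.2 hj
  simp only [idxGen, hi', hj', dite_false]
  split_ifs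
  · exact lorentz.neg_mem (sum_Jv _)
  · exact lorentz.neg_mem (sum_Kv _)
  · exact sum_Kv _
  · exact sum_Jv _

theorem bra_mem_lorentz (Λ : ℝ) {x y : V} (hx : x ∈ lorentz) (hy : y ∈ lorentz) :
    bra Λ x y ∈ lorentz := by
  refine lorentz.sum_mem fun i _ => lorentz.sum_mem fun j _ => ?_
  rcases lt_or_ge i 4 with hi | hi
  · simp [mem_lorentz.1 hx i hi]
  rcases lt_or_ge j 4 with hj | hj
  · simp [mem_lorentz.1 hy j hj]
  exact lorentz.smul_mem _ (genBra_mem_lorentz Λ hi hj)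

theorem bra_time_translation_apply (Λ : ℝ) (x : V) :
    bra Λ (e 0) x 1 = -x 4 ∧ bra Λ (e 0) x 2 = -x 5 ∧ bra Λ (e 0) x 3 = -x 6 := by
  simp only [bra_apply_eq_sum_right Λ (e 0) x, bra_eq_braₗ, braₗ_e_e]
  simp [Fin.sum_univ_succ, idxGen, genBra, PPbra, KPbra, JPbra, eps, Pv, Kv, e]

theorem bra_space_translation_apply (Λ : ℝ) (x : V) :
    bra Λ (e 2) x 3 = -x 7 ∧ bra Λ (e 3) x 1 = -x 8 ∧ bra Λ (e 1) x 2 = -x 9 := by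
  simp only [bra_apply_eq_sum_right Λ (e _) x, bra_eq_braₗ, braₗ_e_e]
  simp [Fin.sum_univ_succ, idxGen, genBra, PPbra, KPbra, JPbra, eps, Pv, Kv, Jv, e]

theorem eq_zero_of_bra_translation_eq_zero (Λ : ℝ) {x : V} (hx : x ∈ lorentz)
    (h : ∀ μ < 4, ∀ ν < 4, bra Λ (e μ) x ν = 0) : x = 0 := by
  obtain ⟨hK₁, hK₂, hK₃⟩ := bra_time_translation_apply Λ x
  obtain ⟨hJ₁, hJ₂, hJ₃⟩ := bra_space_translation_apply Λ x
  rw [h _ (by decide) _ (by decide), zero_eq_neg] at hK₁ hK₂ hK₃ hJ₁ hJ₂ hJ₃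
  ext i
  rcases lt_or_ge i 4 with hi | hi
  · exact mem_lorentz.1 hx i hi
  · fin_cases i <;> first | assumption | exact absurd hi (by decide)

-- Here and below, the vanishing of the slices with first index `< 4` encodes `T ∈ 𝔥 ⊗ g_Λ ⊗ g_Λ`
-- (resp. `r ∈ 𝔥 ⊗ g_Λ`).
theorem eq_zero_of_translation_invariant (Λ : ℝ) {T : T3} (hT : ∀ p < 4, T p = 0)
    (hinv : ∀ μ < 4, adT3 Λ (e μ) T = 0) : T = 0 := by
  have hslot (q s : Fin 10) : (fun i => T i q s) = 0 := by
    refine eq_zero_of_bra_translation_eq_zero Λ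
      (mem_lorentz.2 fun p hp => by simp [hT p hp]) fun μ hμ ν hν => ?_
    have hcomp : adT3 Λ (e μ) T ν q s = 0 := by rw [hinv μ hμ]; rfl
    simpa [adT3_apply, hT ν hν, ← Pi.zero_def, bra_eq_braₗ] using hcomp
  ext p q s
  exact congrFun (hslot q s) p

theorem schouten_apply_eq_zero_of_lt_four (Λ : ℝ) {r : T2} (hr : ∀ i < 4, r i = 0) {p : Fin 10}
    (hp : p < 4) : schouten Λ r p = 0 := by
  have hcol (q : Fin 10) : (fun i => r i q) ∈ lorentz :=
    mem_lorentz.2 fun i hi => by simp [hr i hi]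
  ext q s
  rw [schouten_apply, mem_lorentz.1 (bra_mem_lorentz Λ (hcol q) (hcol s)) p hp, hr p hp]
  simp [bra_eq_braₗ]

theorem schouten_invariant_iff_eq_zero (Λ : ℝ) {r : T2} (hr : ∀ i < 4, r i = 0) :
    (∀ X, adT3 Λ X (schouten Λ r) = 0) ↔ schouten Λ r = 0 := by
  refine ⟨fun h => eq_zero_of_translation_invariant Λ
    (fun _ => schouten_apply_eq_zero_of_lt_four Λ hr) fun μ _ => h (e μ), fun h X => ?_⟩
  ext p q s
  simp [h, adT3]

theorem rC_swap (γ χ : ℝ) (i j : Fin 10) : rC γ χ j i = -rC γ χ i j := by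
  simp only [rC, wEl, Pi.add_apply, Pi.smul_apply, smul_eq_mul, wedge_swap _ _ i j]
  ring

theorem rC_apply_eq_zero_of_lt_four (γ χ : ℝ) {i : Fin 10} (hi : i < 4) : rC γ χ i = 0 := by
  have hne (j : Fin 10) (hj : 4 ≤ j) : i ≠ j := (hi.trans_le hj).ne
  ext j
  simp [rC, wEl, wedge, e_apply, hne]

theorem rC_apply_K₁ (γ χ : ℝ) : rC γ χ 4 = (-γ) • e 7 := by
  simp only [rC, wEl, Pi.add_apply, Pi.smul_apply, wedge_apply, e_apply, Fin.reduceEq, ↓reduceIte]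
  module

theorem rC_apply_K₃ (γ χ : ℝ) : rC γ χ 6 = (γ + χ / 2) • e 5 + (χ / 2) • e 9 := by
  simp only [rC, wEl, Pi.add_apply, Pi.smul_apply, wedge_apply, e_apply, Fin.reduceEq, ↓reduceIte]
  module

theorem rC_apply_J₂ (γ χ : ℝ) : rC γ χ 8 = (γ - χ / 2) • e 9 - (χ / 2) • e 5 := by
  simp only [rC, wEl, Pi.add_apply, Pi.smul_apply, wedge_apply, e_apply, Fin.reduceEq, ↓reduceIte]
  module

theorem schouten_rC_K₁_J₂_K₃ (Λ γ χ : ℝ) : schouten Λ (rC γ χ) 4 8 6 = -γ ^ 2 := by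
  have hJ₁K₂ : braₗ Λ (e 7) (e 5) = e 6 := by simp [braₗ_e_e, idxGen, genBra, JKbra, eps, Kv]
  have hJ₁J₃ : braₗ Λ (e 7) (e 9) = -e 8 := by simp [braₗ_e_e, idxGen, genBra, JJbra, eps, Jv]
  have hJ₃K₂ : braₗ Λ (e 9) (e 5) = -e 4 := by simp [braₗ_e_e, idxGen, genBra, JKbra, eps, Kv]
  have hK₂J₃ : braₗ Λ (e 5) (e 9) = e 4 := by rw [← neg_neg (e 4), ← hJ₃K₂]; exact bra_swap Λ _ _
  have hJ₃J₃ : braₗ Λ (e 9) (e 9) = 0 := bra_self Λ _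
  have hK₂K₂ : braₗ Λ (e 5) (e 5) = 0 := bra_self Λ _
  have hJ₂K₃ : bra Λ (rC γ χ 8) (rC γ χ 6) = (-γ ^ 2) • e 4 := by
    simp only [rC_apply_J₂, rC_apply_K₃, bra_eq_braₗ, map_add, map_sub, map_smul,
      LinearMap.sub_apply, LinearMap.smul_apply, hJ₃K₂, hK₂J₃, hJ₃J₃, hK₂K₂]
    module
  have hK₁K₃ : bra Λ (rC γ χ 4) (rC γ χ 6) =
      (-(γ * (γ + χ / 2))) • e 6 + (γ * χ / 2) • e 8 := by
    simp only [rC_apply_K₁, rC_apply_K₃, bra_eq_braₗ, map_add, map_smul,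
      LinearMap.smul_apply, hJ₁K₂, hJ₁J₃]
    module
  have hK₁J₂ : bra Λ (rC γ χ 4) (rC γ χ 8) = (γ * (γ - χ / 2)) • e 8 + (γ * χ / 2) • e 6 := by
    simp only [rC_apply_K₁, rC_apply_J₂, bra_eq_braₗ, map_sub, map_smul,
      LinearMap.smul_apply, hJ₁K₂, hJ₁J₃]
    module
  simp [schouten_apply_of_skew Λ (rC_swap γ χ), hJ₂K₃, hK₁K₃, hK₁J₂, e]

theorem rC_zero (χ : ℝ) :
    rC 0 χ = (-(χ / 2)) • (wEl 5 6 - wEl 5 8 - wEl 6 9 + wEl 8 9) := by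
  simp only [rC]
  module

theorem rC_zero_eq_smul_wedge (χ : ℝ) :
    rC 0 χ = (-(χ / 2)) • wedge (e 5 + e 9) (e 6 - e 8) := by
  rw [rC_zero]
  congr 1
  ext i j
  simp only [wEl, wedge, Pi.add_apply, Pi.sub_apply]
  ring

theorem bra_K₂_add_J₃_K₃_sub_J₂_eq_zero (Λ : ℝ) : bra Λ (e 5 + e 9) (e 6 - e 8) = 0 := by
  simp [bra_eq_braₗ, braₗ_e_e, idxGen, genBra, KKbra, JKbra, JJbra, eps]

theorem schouten_rC_zero (Λ χ : ℝ) : schouten Λ (rC 0 χ) = 0 := by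
  rw [rC_zero_eq_smul_wedge, schouten_smul]
  ext p q s
  simp [schouten_wedge_apply, bra_K₂_add_J₃_K₃_sub_J₂_eq_zero]

theorem schouten_rC_eq_zero_iff (Λ γ χ : ℝ) : schouten Λ (rC γ χ) = 0 ↔ γ = 0 := by
  refine ⟨fun h => ?_, fun hγ => hγ ▸ schouten_rC_zero Λ χ⟩
  simpa [h] using schouten_rC_K₁_J₂_K₃ Λ γ χ

/-- `[[r_C,r_C]]` is `g_Λ`-invariant iff `γ = 0`; in that case
`r_C = −(χ'/2)(K_2∧K_3 − K_2∧J_2 − K_3∧J_3 + J_2∧J_3)` and `[[r_C,r_C]] = 0`. -/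
theorem rC_schouten_invariant_iff (Λ γ χ : ℝ) :
    ((∀ X : V, adT3 Λ X (schouten Λ (rC γ χ)) = 0) ↔ γ = 0) ∧
    (γ = 0 →
      rC γ χ = (-(χ / 2)) • (wEl 5 6 - wEl 5 8 - wEl 6 9 + wEl 8 9) ∧
      schouten Λ (rC γ χ) = 0) :=
  ⟨(schouten_invariant_iff_eq_zero Λ fun _ hi => rC_apply_eq_zero_of_lt_four γ χ hi).trans
      (schouten_rC_eq_zero_iff Λ γ χ),
    fun hγ => ⟨hγ ▸ rC_zero χ, (schouten_rC_eq_zero_iff Λ γ χ).2 hγ⟩⟩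

end
end NCST
end

section
/- Let Λ ∈ ℝ and a_2, b_2, c_2, c_1 ∈ ℝ, and let r = a_2 J_3∧K_1 + b_2 J_3∧K_2 + c_2 K_1∧K_2 + c_1 (J_3∧P_0 − P_1∧K_2 + P_2∧K_1) ∈ g_Λ^{2+1} ∧ g_Λ^{2+1}. Then the Schouten bracket [[r,r]] is invariant under the adjoint action of all of g_Λ^{2+1} (i.e. X·[[r,r]] = 0 for every X ∈ g_Λ^{2+1}) if and only if c_2² − a_2² − b_2² − 4Λ c_1² = 0. -/
namespace NCST3

noncomputable section

/-- The underlying 6-dimensional vector space of `g_Λ^{2+1}`, with basis indices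
`0,1,2 ↦ P_0,P_1,P_2`, `3 ↦ K_1`, `4 ↦ K_2`, `5 ↦ J_3`. -/
abbrev V6 : Type := Fin 6 → ℝ

/-- The `i`-th basis vector. -/
def e6 (i : Fin 6) : V6 := Pi.single i 1

/-- The bracket `[X_i, X_j]` of two basis generators of `g_Λ^{2+1}`:
`[J_3,P_1]=P_2`, `[J_3,P_2]=−P_1`, `[J_3,K_1]=K_2`, `[J_3,K_2]=−K_1`, `[J_3,P_0]=0`,
`[K_a,P_0]=P_a`, `[K_a,P_b]=δ_{ab}P_0`, `[K_1,K_2]=−J_3`,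
`[P_0,P_a]=−Λ K_a`, `[P_1,P_2]=Λ J_3`. -/
def braB6 (Λ : ℝ) : Fin 6 → Fin 6 → V6 :=
  ![![0, (-Λ) • e6 3, (-Λ) • e6 4, -e6 1, -e6 2, 0],
    ![Λ • e6 3, 0, Λ • e6 5, -e6 0, 0, -e6 2],
    ![Λ • e6 4, (-Λ) • e6 5, 0, 0, -e6 0, e6 1],
    ![e6 1, e6 0, 0, 0, -e6 5, -e6 4],
    ![e6 2, 0, e6 0, e6 5, 0, e6 3],
    ![0, e6 2, -e6 1, e6 4, -e6 3, 0]]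

/-- The bracket of `g_Λ^{2+1}`, extended bilinearly from the structure constants. -/
def bra6 (Λ : ℝ) (x y : V6) : V6 :=
  ∑ i : Fin 6, ∑ j : Fin 6, (x i * y j) • braB6 Λ i j

/-- Coefficients of elements of `g_Λ^{2+1} ⊗ g_Λ^{2+1}`. -/
abbrev T2₆ : Type := Fin 6 → Fin 6 → ℝ
/-- Coefficients of elements of the triple tensor power of `g_Λ^{2+1}`. -/
abbrev T3₆ : Type := Fin 6 → Fin 6 → Fin 6 → ℝ

/-- The diagonal adjoint action `X·(a⊗b) = [X,a]⊗b + a⊗[X,b]`, in coordinates. -/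
def adT6 (Λ : ℝ) (X : V6) (r : T2₆) : T2₆ :=
  fun k l => (∑ i : Fin 6, r i l * bra6 Λ X (e6 i) k) +
    ∑ j : Fin 6, r k j * bra6 Λ X (e6 j) l

/-- `x ∧ y := x ⊗ y - y ⊗ x`, in coordinates. -/
def wedge6 (x y : V6) : T2₆ := fun i j => x i * y j - x j * y i

/-- The wedge `e_i ∧ e_j` of two basis vectors. -/
def wEl6 (i j : Fin 6) : T2₆ := wedge6 (e6 i) (e6 j)

/-- The Schouten bracket `[[r,r]]`, in coordinates: for `r = Σ aᵢ⊗bᵢ`,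
`[[r,r]] = Σᵢⱼ ([aᵢ,aⱼ]⊗bᵢ⊗bⱼ + aᵢ⊗[bᵢ,aⱼ]⊗bⱼ + aᵢ⊗aⱼ⊗[bᵢ,bⱼ])`. -/
def schouten6 (Λ : ℝ) (r : T2₆) : T3₆ :=
  fun p q s =>
    ∑ i : Fin 6, ∑ j : Fin 6, ∑ k : Fin 6, ∑ l : Fin 6, r i j * r k l *
      (bra6 Λ (e6 i) (e6 k) p * (if j = q then (1:ℝ) else 0) * (if l = s then (1:ℝ) else 0)
      + (if i = p then (1:ℝ) else 0) * bra6 Λ (e6 j) (e6 k) q * (if l = s then (1:ℝ) else 0)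
      + (if i = p then (1:ℝ) else 0) * (if k = q then (1:ℝ) else 0) * bra6 Λ (e6 j) (e6 l) s)

/-- The diagonal adjoint action of `X` on the triple tensor power, in coordinates. -/
def adT36 (Λ : ℝ) (X : V6) (T : T3₆) : T3₆ :=
  fun p q s => (∑ i : Fin 6, T i q s * bra6 Λ X (e6 i) p)
    + (∑ j : Fin 6, T p j s * bra6 Λ X (e6 j) q)
    + ∑ k : Fin 6, T p q k * bra6 Λ X (e6 k) s

/-- The special (2+1)D element `J_3∧P_0 − P_1∧K_2 + P_2∧K_1`
(`J_3 = e_5`, `P_0 = e_0`, `P_1 = e_1`, `P_2 = e_2`, `K_1 = e_3`, `K_2 = e_4`). -/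
def rSpec : T2₆ := wEl6 5 0 - wEl6 1 4 + wEl6 2 3

/-! The polarization `⟦r, t⟧ = [[r + t, r + t]] - [[r, r]] - [[t, t]]` of the Schouten bracket
satisfies `⟦x ∧ y, t⟧ = x ∧ (y·t) - y ∧ (x·t)` for every bivector `t`. Write `r = ω + c₁ s`, where
`ω` is built from the Lorentz generators `J_3, K_1, K_2` and `s = J_3∧P_0 - P_1∧K_2 + P_2∧K_1`.
Since `s` is Lorentz invariant, the formula makes the cross term of `[[r, r]]` vanish. With `κ =
K_1∧K_2∧J_3` and `C` the invariant trivector dual to the Cartan 3-form, it also gives `[[ω, ω]] =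
(a₂² + b₂² - c₂²) κ` and `[[s, s]] = C + 4Λ κ`, hence `[[r, r]] = c₁² C - (c₂² - a₂² - b₂² - 4Λ c₁²)
κ`. As `C` is invariant and `κ` is not, invariance of `[[r, r]]` amounts to the vanishing of the
coefficient of `κ`. -/

theorem bra6_apply (Λ : ℝ) (x y : V6) (p : Fin 6) :
    bra6 Λ x y p = ∑ i, ∑ j, x i * y j * braB6 Λ i j p := by
  simp [bra6, Finset.sum_apply]

theorem bra6_e6_right (Λ : ℝ) (x : V6) (j : Fin 6) :
    bra6 Λ x (e6 j) = ∑ i, x i • braB6 Λ i j := by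
  simp [bra6, e6, Pi.single_apply]

theorem bra6_e6 (Λ : ℝ) (i j : Fin 6) : bra6 Λ (e6 i) (e6 j) = braB6 Λ i j := by
  simp [bra6, e6, Pi.single_apply]

theorem braB6_swap (Λ : ℝ) (i j : Fin 6) : braB6 Λ j i = -braB6 Λ i j := by
  fin_cases i <;> fin_cases j <;> simp [braB6]

theorem bra6_swap (Λ : ℝ) (x y : V6) : bra6 Λ y x = -bra6 Λ x y := by
  ext p
  rw [Pi.neg_apply, bra6_apply, bra6_apply, Finset.sum_comm]
  simp only [← Finset.sum_neg_distrib]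
  refine Finset.sum_congr rfl fun i _ => Finset.sum_congr rfl fun j _ => ?_
  rw [braB6_swap Λ i j, Pi.neg_apply]
  ring

/-- The bracket of `g_Λ^{2+1}` as a bilinear map. -/
def bra6Bilin (Λ : ℝ) : V6 →ₗ[ℝ] V6 →ₗ[ℝ] V6 :=
  LinearMap.mk₂ ℝ (bra6 Λ)
    (fun x x' y => by simp [bra6, add_mul, add_smul, Finset.sum_add_distrib])
    (fun c x y => by simp [bra6, mul_assoc, mul_smul, Finset.smul_sum])
    (fun x y y' => by simp [bra6, mul_add, add_smul, Finset.sum_add_distrib])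
    (fun c x y => by simp [bra6, mul_left_comm, mul_smul, Finset.smul_sum])

theorem bra6Bilin_apply (Λ : ℝ) (x y : V6) : bra6Bilin Λ x y = bra6 Λ x y := rfl

theorem bra6_e6_zero (Λ : ℝ) (X : V6) :
    bra6 Λ X (e6 0) = X 3 • e6 1 + X 4 • e6 2 + (Λ * X 1) • e6 3 + (Λ * X 2) • e6 4 := by
  simp only [bra6_e6_right, Fin.sum_univ_six, braB6, Matrix.cons_val]
  module

theorem bra6_e6_one (Λ : ℝ) (X : V6) :
    bra6 Λ X (e6 1) = X 3 • e6 0 + X 5 • e6 2 - (Λ * X 0) • e6 3 - (Λ * X 2) • e6 5 := by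
  simp only [bra6_e6_right, Fin.sum_univ_six, braB6, Matrix.cons_val]
  module

theorem bra6_e6_two (Λ : ℝ) (X : V6) :
    bra6 Λ X (e6 2) = X 4 • e6 0 - X 5 • e6 1 - (Λ * X 0) • e6 4 + (Λ * X 1) • e6 5 := by
  simp only [bra6_e6_right, Fin.sum_univ_six, braB6, Matrix.cons_val]
  module

theorem bra6_e6_three (Λ : ℝ) (X : V6) :
    bra6 Λ X (e6 3) = X 5 • e6 4 + X 4 • e6 5 - X 0 • e6 1 - X 1 • e6 0 := by
  simp only [bra6_e6_right, Fin.sum_univ_six, braB6, Matrix.cons_val]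
  module

theorem bra6_e6_four (Λ : ℝ) (X : V6) :
    bra6 Λ X (e6 4) = -X 0 • e6 2 - X 2 • e6 0 - X 3 • e6 5 - X 5 • e6 3 := by
  simp only [bra6_e6_right, Fin.sum_univ_six, braB6, Matrix.cons_val]
  module

theorem bra6_e6_five (Λ : ℝ) (X : V6) :
    bra6 Λ X (e6 5) = X 2 • e6 1 - X 1 • e6 2 + X 4 • e6 3 - X 3 • e6 4 := by
  simp only [bra6_e6_right, Fin.sum_univ_six, braB6, Matrix.cons_val]
  module

theorem sum_mul_bra6_e6 (Λ : ℝ) (X x : V6) (p : Fin 6) :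
    ∑ i, x i * bra6 Λ X (e6 i) p = bra6 Λ X x p := by
  simp only [bra6_e6_right]
  simp only [bra6_apply, Finset.sum_apply, Pi.smul_apply, smul_eq_mul, Finset.mul_sum]
  rw [Finset.sum_comm]
  exact Finset.sum_congr rfl fun i _ => Finset.sum_congr rfl fun j _ => by ring

/-- The space `g ∧ g` of antisymmetric elements of `g ⊗ g`. -/
def bivectors : Submodule ℝ T2₆ where
  carrier := {r | ∀ i j, r j i = -r i j}
  zero_mem' := by simp
  add_mem' hr ht i j := by simp [hr i j, ht i j, add_comm]
  smul_mem' c r hr i j := by simp [hr i j]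

theorem wedge6_mem_bivectors (x y : V6) : wedge6 x y ∈ bivectors := fun i j => by
  simp only [wedge6]; ring

theorem wEl6_mem_bivectors (i j : Fin 6) : wEl6 i j ∈ bivectors := wedge6_mem_bivectors _ _

/-- The wedge product `x ∧ t` of a vector with a bivector. -/
def vecWedge6 (x : V6) (t : T2₆) : T3₆ := fun p q s =>
  x p * t q s + x q * t s p + x s * t p q

theorem vecWedge6_zero (x : V6) : vecWedge6 x 0 = 0 := by
  ext p q s
  simp [vecWedge6]

theorem isLinearMap_adT6 (Λ : ℝ) (X : V6) : IsLinearMap ℝ (adT6 Λ X) where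
  map_add r t := by
    ext k l
    simp only [adT6, Pi.add_apply, add_mul, Finset.sum_add_distrib]
    ring
  map_smul c t := by
    ext k l
    simp only [adT6, Pi.smul_apply, smul_eq_mul, mul_assoc, ← Finset.mul_sum, mul_add]

theorem isLinearMap_adT36 (Λ : ℝ) (X : V6) : IsLinearMap ℝ (adT36 Λ X) where
  map_add S T := by
    ext p q s
    simp only [adT36, Pi.add_apply, add_mul, Finset.sum_add_distrib]
    ring
  map_smul c T := by
    ext p q s
    simp only [adT36, Pi.smul_apply, smul_eq_mul, mul_assoc, ← Finset.mul_sum, mul_add]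

theorem adT6_apply_of_mem (Λ : ℝ) (X : V6) {t : T2₆} (ht : t ∈ bivectors) (k l : Fin 6) :
    adT6 Λ X t k l = bra6 Λ X (t k) l - bra6 Λ X (t l) k := by
  simp only [adT6, ht l, neg_mul, Finset.sum_neg_distrib, sum_mul_bra6_e6]
  ring

theorem adT6_wedge6 (Λ : ℝ) (X x y : V6) :
    adT6 Λ X (wedge6 x y) = wedge6 (bra6 Λ X x) y + wedge6 x (bra6 Λ X y) := by
  ext k l
  simp only [adT6, wedge6, Pi.add_apply, ← sum_mul_bra6_e6 Λ X x, ← sum_mul_bra6_e6 Λ X y,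
    Fin.sum_univ_six]
  ring

theorem adT6_wEl6 (Λ : ℝ) (X : V6) (i j : Fin 6) :
    adT6 Λ X (wEl6 i j) = wedge6 (bra6 Λ X (e6 i)) (e6 j) + wedge6 (e6 i) (bra6 Λ X (e6 j)) :=
  adT6_wedge6 Λ X _ _

theorem adT36_vecWedge6 (Λ : ℝ) (X x : V6) (t : T2₆) :
    adT36 Λ X (vecWedge6 x t) = vecWedge6 (bra6 Λ X x) t + vecWedge6 x (adT6 Λ X t) := by
  ext p q s
  simp only [adT36, adT6, vecWedge6, Pi.add_apply, ← sum_mul_bra6_e6 Λ X x, Fin.sum_univ_six]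
  ring

/-- The bilinear map sending `(Σ aᵢ⊗bᵢ, Σ cⱼ⊗dⱼ)` to
`Σᵢⱼ ([aᵢ,cⱼ]⊗bᵢ⊗dⱼ + aᵢ⊗[bᵢ,cⱼ]⊗dⱼ + aᵢ⊗cⱼ⊗[bᵢ,dⱼ])`, whose diagonal is the Schouten bracket.
It is encoded through the rows `r p` and columns `fun i => r i q` of a coefficient matrix, which
are the vectors obtained by taking a coordinate of the first or of the second tensor factor. -/
def schoutenBilin (Λ : ℝ) : T2₆ →ₗ[ℝ] T2₆ →ₗ[ℝ] T3₆ :=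
  LinearMap.mk₂ ℝ
    (fun r t p q s => bra6 Λ (fun i => r i q) (fun k => t k s) p +
      bra6 Λ (r p) (fun k => t k s) q + bra6 Λ (r p) (t q) s)
    (fun r r' t => by
      ext p q s
      simp only [bra6_apply, Pi.add_apply, add_mul, Finset.sum_add_distrib]
      ring)
    (fun c r t => by
      ext p q s
      simp only [bra6_apply, Pi.smul_apply, smul_eq_mul, mul_assoc, ← Finset.mul_sum, mul_add])
    (fun r t t' => by
      ext p q s
      simp only [bra6_apply, Pi.add_apply, add_mul, mul_add, Finset.sum_add_distrib]
      ring)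
    (fun c r t => by
      ext p q s
      simp only [bra6_apply, Pi.smul_apply, smul_eq_mul, mul_assoc, mul_left_comm _ c,
        ← Finset.mul_sum, mul_add])

theorem schoutenBilin_self (Λ : ℝ) (r : T2₆) : schoutenBilin Λ r r = schouten6 Λ r := by
  ext p q s
  simp only [schouten6, bra6_e6, mul_add, Finset.sum_add_distrib]
  simp only [schoutenBilin, LinearMap.mk₂_apply, bra6_apply]
  refine congrArg₂ _ (congrArg₂ _ ?_ ?_) ?_
  · refine Finset.sum_congr rfl fun i _ => ?_
    rw [Finset.sum_comm]
    simp
  · symm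
    rw [Finset.sum_eq_single p (fun i _ hi => by simp [hi]) (by simp)]
    simp
  · symm
    rw [Finset.sum_eq_single p (fun i _ hi => by simp [hi]) (by simp)]
    refine Finset.sum_congr rfl fun i _ => ?_
    rw [Finset.sum_eq_single q (fun k _ hk => by simp [hk]) (by simp)]
    simp

theorem schoutenBilin_apply_of_mem (Λ : ℝ) {r t : T2₆} (hr : r ∈ bivectors) (ht : t ∈ bivectors)
    (p q s : Fin 6) :
    schoutenBilin Λ r t p q s =
      bra6 Λ (r q) (t s) p - bra6 Λ (r p) (t s) q + bra6 Λ (r p) (t q) s := by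
  have column {u : T2₆} (hu : u ∈ bivectors) (j : Fin 6) : (fun i => u i j) = -u j :=
    funext fun i => hu j i
  simp only [schoutenBilin, LinearMap.mk₂_apply, column hr, column ht, ← bra6Bilin_apply, map_neg,
    LinearMap.neg_apply, neg_neg, Pi.neg_apply, sub_eq_add_neg]

/-- The polarization `[[r + t, r + t]] - [[r, r]] - [[t, t]]` of the Schouten bracket, normalized
without the factor `1/2`: its diagonal is `2 [[r, r]]`. -/
def mixedSchouten (Λ : ℝ) : T2₆ →ₗ[ℝ] T2₆ →ₗ[ℝ] T3₆ :=
  schoutenBilin Λ + (schoutenBilin Λ).flip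

theorem mixedSchouten_self (Λ : ℝ) (r : T2₆) :
    mixedSchouten Λ r r = (2 : ℝ) • schouten6 Λ r := by
  simp [mixedSchouten, schoutenBilin_self, two_smul]

theorem mixedSchouten_wedge6 (Λ : ℝ) (x y : V6) {t : T2₆} (ht : t ∈ bivectors) :
    mixedSchouten Λ (wedge6 x y) t =
      vecWedge6 x (adT6 Λ y t) - vecWedge6 y (adT6 Λ x t) := by
  have row (i : Fin 6) : wedge6 x y i = x i • y - y i • x := by
    ext j; simp only [wedge6, Pi.sub_apply, Pi.smul_apply, smul_eq_mul]; ring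
  ext p q s
  simp only [mixedSchouten, LinearMap.add_apply, LinearMap.flip_apply, Pi.add_apply, Pi.sub_apply,
    schoutenBilin_apply_of_mem Λ (wedge6_mem_bivectors x y) ht,
    schoutenBilin_apply_of_mem Λ ht (wedge6_mem_bivectors x y), bra6_swap Λ _ (t _), row]
  simp only [vecWedge6, adT6_apply_of_mem Λ _ ht, ← bra6Bilin_apply, map_sub, map_smul,
    LinearMap.sub_apply, LinearMap.smul_apply, Pi.sub_apply, Pi.smul_apply, Pi.neg_apply,
    smul_eq_mul]
  ring

theorem schouten6_add (Λ : ℝ) (r t : T2₆) :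
    schouten6 Λ (r + t) = schouten6 Λ r + mixedSchouten Λ r t + schouten6 Λ t := by
  simp only [← schoutenBilin_self, mixedSchouten, map_add, LinearMap.add_apply,
    LinearMap.flip_apply]
  abel

theorem schouten6_smul (Λ c : ℝ) (r : T2₆) : schouten6 Λ (c • r) = c ^ 2 • schouten6 Λ r := by
  simp only [← schoutenBilin_self, map_smul, LinearMap.smul_apply, smul_smul, sq]

/-- A general element of `h ∧ h`, where `h` is the Lorentz subalgebra spanned by `J_3, K_1, K_2`. -/
def lorentzBivector (a b c : ℝ) : T2₆ := a • wEl6 5 3 + b • wEl6 5 4 + c • wEl6 3 4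

theorem rSpec_mem_bivectors : rSpec ∈ bivectors :=
  add_mem (sub_mem (wEl6_mem_bivectors 5 0) (wEl6_mem_bivectors 1 4)) (wEl6_mem_bivectors 2 3)

theorem lorentzBivector_mem_bivectors (a b c : ℝ) : lorentzBivector a b c ∈ bivectors :=
  add_mem (add_mem (bivectors.smul_mem a (wEl6_mem_bivectors 5 3))
    (bivectors.smul_mem b (wEl6_mem_bivectors 5 4))) (bivectors.smul_mem c (wEl6_mem_bivectors 3 4))

/-- The volume element `K_1∧K_2∧J_3` of the Lorentz subalgebra. -/
def lorentzTrivector : T3₆ := vecWedge6 (e6 5) (wEl6 3 4)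

/-- The trivector `P_0∧P_1∧K_1 + P_0∧P_2∧K_2 + P_1∧P_2∧J_3 - Λ K_1∧K_2∧J_3`, which is the Cartan
3-form `⟨[x, y], z⟩` with its indices raised by the invariant pairing `⟨·, ·⟩` that matches
`J_3, K_1, K_2` with `P_0, P_2, P_1` up to sign. -/
def cartanTrivector (Λ : ℝ) : T3₆ :=
  vecWedge6 (e6 0) (wEl6 1 3) + vecWedge6 (e6 0) (wEl6 2 4) + vecWedge6 (e6 5) (wEl6 1 2) -
    Λ • lorentzTrivector

theorem adT6_rSpec (Λ : ℝ) (X : V6) :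
    adT6 Λ X rSpec =
      (2 * X 0) • (wEl6 1 2 + Λ • wEl6 3 4) + (2 * X 1) • (wEl6 0 2 + Λ • wEl6 5 3) -
        (2 * X 2) • (wEl6 0 1 - Λ • wEl6 5 4) := by
  simp only [rSpec, (isLinearMap_adT6 Λ X).map_add, (isLinearMap_adT6 Λ X).map_sub, adT6_wEl6,
    bra6_e6_zero, bra6_e6_one, bra6_e6_two, bra6_e6_three, bra6_e6_four, bra6_e6_five]
  ext p q
  simp only [wEl6, wedge6, Pi.add_apply, Pi.sub_apply, Pi.smul_apply, smul_eq_mul]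
  ring

theorem adT6_e6_rSpec_eq_zero (Λ : ℝ) {i : Fin 6} (hi : 3 ≤ i) : adT6 Λ (e6 i) rSpec = 0 := by
  have h (j : Fin 6) (hj : j < 3) : e6 i j = 0 := Pi.single_eq_of_ne (hj.trans_le hi).ne 1
  simp [adT6_rSpec, h 0, h 1, h 2]

theorem adT6_lorentzBivector (Λ a b c : ℝ) {X : V6} (h₀ : X 0 = 0) (h₁ : X 1 = 0) (h₂ : X 2 = 0) :
    adT6 Λ X (lorentzBivector a b c) =
      lorentzBivector (c * X 3 - b * X 5) (c * X 4 + a * X 5) (a * X 3 + b * X 4) := by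
  simp only [lorentzBivector, (isLinearMap_adT6 Λ X).map_add, (isLinearMap_adT6 Λ X).map_smul,
    adT6_wEl6, bra6_e6_three, bra6_e6_four, bra6_e6_five, h₀, h₁, h₂]
  ext p q
  simp only [wEl6, wedge6, Pi.add_apply, Pi.sub_apply, Pi.smul_apply, smul_eq_mul]
  ring

theorem adT36_cartanTrivector (Λ : ℝ) (X : V6) : adT36 Λ X (cartanTrivector Λ) = 0 := by
  simp only [cartanTrivector, lorentzTrivector, (isLinearMap_adT36 Λ X).map_add,
    (isLinearMap_adT36 Λ X).map_sub, (isLinearMap_adT36 Λ X).map_smul, adT36_vecWedge6, adT6_wEl6,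
    bra6_e6_zero, bra6_e6_one, bra6_e6_two, bra6_e6_three, bra6_e6_four, bra6_e6_five]
  ext p q s
  simp only [vecWedge6, wEl6, wedge6, Pi.add_apply, Pi.sub_apply, Pi.smul_apply, smul_eq_mul,
    Pi.zero_apply]
  ring

theorem adT36_e6_zero_lorentzTrivector_ne_zero (Λ : ℝ) :
    adT36 Λ (e6 0) lorentzTrivector ≠ 0 := by
  intro h
  -- `[P_0, K_1] = -P_1` gives `P_0·(K_1∧K_2∧J_3)` a term `-P_1∧K_2∧J_3`.
  have h' := congrFun (congrFun (congrFun h 1) 4) 5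
  rw [lorentzTrivector, adT36_vecWedge6, adT6_wEl6, bra6_e6_three, bra6_e6_four, bra6_e6_five] at h'
  simp [vecWedge6, wEl6, wedge6, e6] at h'

theorem mixedSchouten_rSpec (Λ : ℝ) {t : T2₆} (ht : t ∈ bivectors) :
    mixedSchouten Λ rSpec t =
      (vecWedge6 (e6 5) (adT6 Λ (e6 0) t) - vecWedge6 (e6 0) (adT6 Λ (e6 5) t)) -
        (vecWedge6 (e6 1) (adT6 Λ (e6 4) t) - vecWedge6 (e6 4) (adT6 Λ (e6 1) t)) +
        (vecWedge6 (e6 2) (adT6 Λ (e6 3) t) - vecWedge6 (e6 3) (adT6 Λ (e6 2) t)) := by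
  simp only [rSpec, wEl6, map_add, map_sub, LinearMap.add_apply, LinearMap.sub_apply,
    mixedSchouten_wedge6 Λ _ _ ht]

theorem mixedSchouten_lorentzBivector (Λ a b c : ℝ) {t : T2₆} (ht : t ∈ bivectors) :
    mixedSchouten Λ (lorentzBivector a b c) t =
      a • (vecWedge6 (e6 5) (adT6 Λ (e6 3) t) - vecWedge6 (e6 3) (adT6 Λ (e6 5) t)) +
        b • (vecWedge6 (e6 5) (adT6 Λ (e6 4) t) - vecWedge6 (e6 4) (adT6 Λ (e6 5) t)) +
        c • (vecWedge6 (e6 3) (adT6 Λ (e6 4) t) - vecWedge6 (e6 4) (adT6 Λ (e6 3) t)) := by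
  simp only [lorentzBivector, wEl6, map_add, map_smul, LinearMap.add_apply, LinearMap.smul_apply,
    mixedSchouten_wedge6 Λ _ _ ht]

theorem mixedSchouten_lorentzBivector_rSpec (Λ a b c : ℝ) :
    mixedSchouten Λ (lorentzBivector a b c) rSpec = 0 := by
  rw [mixedSchouten_lorentzBivector Λ a b c rSpec_mem_bivectors,
    adT6_e6_rSpec_eq_zero Λ (i := 3) (by decide), adT6_e6_rSpec_eq_zero Λ (i := 4) (by decide),
    adT6_e6_rSpec_eq_zero Λ (i := 5) (by decide)]
  simp [vecWedge6_zero]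

theorem schouten6_rSpec (Λ : ℝ) :
    schouten6 Λ rSpec = cartanTrivector Λ + (4 * Λ) • lorentzTrivector := by
  rw [← smul_right_inj (two_ne_zero (α := ℝ)), ← mixedSchouten_self,
    mixedSchouten_rSpec Λ rSpec_mem_bivectors]
  have hP₀ : adT6 Λ (e6 0) rSpec = (2 : ℝ) • (wEl6 1 2 + Λ • wEl6 3 4) := by
    simp [adT6_rSpec, e6]
  have hP₁ : adT6 Λ (e6 1) rSpec = (2 : ℝ) • (wEl6 0 2 + Λ • wEl6 5 3) := by
    simp [adT6_rSpec, e6]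
  have hP₂ : adT6 Λ (e6 2) rSpec = (-2 : ℝ) • (wEl6 0 1 - Λ • wEl6 5 4) := by
    simp [adT6_rSpec, e6]
  have hK₁ : adT6 Λ (e6 3) rSpec = 0 := adT6_e6_rSpec_eq_zero Λ (by decide)
  have hK₂ : adT6 Λ (e6 4) rSpec = 0 := adT6_e6_rSpec_eq_zero Λ (by decide)
  have hJ₃ : adT6 Λ (e6 5) rSpec = 0 := adT6_e6_rSpec_eq_zero Λ (by decide)
  rw [hP₀, hP₁, hP₂, hK₁, hK₂, hJ₃]
  ext p q s
  simp only [cartanTrivector, lorentzTrivector, vecWedge6, wEl6, wedge6, Pi.add_apply,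
    Pi.sub_apply, Pi.smul_apply, smul_eq_mul, Pi.zero_apply]
  ring

theorem schouten6_lorentzBivector (Λ a b c : ℝ) :
    schouten6 Λ (lorentzBivector a b c) = (a ^ 2 + b ^ 2 - c ^ 2) • lorentzTrivector := by
  rw [← smul_right_inj (two_ne_zero (α := ℝ)), ← mixedSchouten_self,
    mixedSchouten_lorentzBivector Λ a b c (lorentzBivector_mem_bivectors a b c)]
  have hK₁ : adT6 Λ (e6 3) (lorentzBivector a b c) = lorentzBivector c 0 a := by
    simp [adT6_lorentzBivector, e6]
  have hK₂ : adT6 Λ (e6 4) (lorentzBivector a b c) = lorentzBivector 0 c b := by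
    simp [adT6_lorentzBivector, e6]
  have hJ₃ : adT6 Λ (e6 5) (lorentzBivector a b c) = lorentzBivector (-b) a 0 := by
    simp [adT6_lorentzBivector, e6]
  rw [hK₁, hK₂, hJ₃]
  ext p q s
  simp only [lorentzBivector, lorentzTrivector, vecWedge6, wEl6, wedge6, Pi.add_apply,
    Pi.sub_apply, Pi.smul_apply, smul_eq_mul]
  ring

theorem schouten6_lorentzBivector_add_smul_rSpec (Λ a b c c₁ : ℝ) :
    schouten6 Λ (lorentzBivector a b c + c₁ • rSpec) =
      c₁ ^ 2 • cartanTrivector Λ -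
        (c ^ 2 - a ^ 2 - b ^ 2 - 4 * Λ * c₁ ^ 2) • lorentzTrivector := by
  rw [schouten6_add, map_smul, mixedSchouten_lorentzBivector_rSpec, schouten6_smul,
    schouten6_lorentzBivector, schouten6_rSpec]
  module

/-- For
`r = a₂ J_3∧K_1 + b₂ J_3∧K_2 + c₂ K_1∧K_2 + c₁(J_3∧P_0 − P_1∧K_2 + P_2∧K_1)`,
the Schouten bracket `[[r,r]]` is invariant under the adjoint action of all of
`g_Λ^{2+1}` iff `c₂² − a₂² − b₂² − 4Λc₁² = 0`. -/
theorem general_r21_schouten_invariant_iff (Λ a₂ b₂ c₂ c₁ : ℝ) :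
    (∀ X : V6, adT36 Λ X (schouten6 Λ
        (a₂ • wEl6 5 3 + b₂ • wEl6 5 4 + c₂ • wEl6 3 4 + c₁ • rSpec)) = 0) ↔
      c₂ ^ 2 - a₂ ^ 2 - b₂ ^ 2 - 4 * Λ * c₁ ^ 2 = 0 := by
  rw [← lorentzBivector, schouten6_lorentzBivector_add_smul_rSpec]
  set D := c₂ ^ 2 - a₂ ^ 2 - b₂ ^ 2 - 4 * Λ * c₁ ^ 2
  have action (X : V6) :
      adT36 Λ X (c₁ ^ 2 • cartanTrivector Λ - D • lorentzTrivector) =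
        -(D • adT36 Λ X lorentzTrivector) := by
    rw [(isLinearMap_adT36 Λ X).map_sub, (isLinearMap_adT36 Λ X).map_smul,
      (isLinearMap_adT36 Λ X).map_smul, adT36_cartanTrivector, smul_zero, zero_sub]
  simp only [action, neg_eq_zero, smul_eq_zero]
  exact ⟨fun h => (h (e6 0)).resolve_right (adT36_e6_zero_lorentzTrivector_ne_zero Λ),
    fun h _ => Or.inl h⟩

end
end NCST3
end
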